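/- Let p ∈ 𝒫^log and q ∈ 𝒫₀^log with 0 < q⁻ ≤ q⁺ < ∞ and p⁻ > 1. For every real N > 2n + c_log(1/p) + c_log(1/q), where c_log(1/p) and c_log(1/q) are the locally log-Hölder constants of 1/p and 1/q, there exists a constant c > 0 such that for every sequence (f_v)_{v∈ℕ₀} of measurable functions on ℝⁿ one has ‖(η_{v,N} ∗ f_v)_v‖_{ℓ^{q(·)}(L^{p(·)}_{p(·)})} ≤ c ‖(f_v)_v‖_{ℓ^{q(·)}(L^{p(·)}_{p(·)})}. -/

import Mathlib

/-!
The weight `|P|^{-1/p}` turns the modular of a function on a dyadic cube `P = Q_{k,m}` into an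
average over `P` (`modularVE_cube`). For a sequence `f` of norm less than `μ`, let `λ_v(m')` be the
Luxemburg norm of the `v`-th term of the mixed modular of `f / μ` on the cube `Q_{k,m'}`, so that
`∑_v λ_v(m') ≤ 1` for every `m'`. It suffices to bound the `v`-th term for `η_{v,N} ∗ f_v` on `P`
by a multiple of
`δ_v = 2^{-σ(v-k)} + ∑_e λ_v(m + e)`, with `e` running over the offsets of the neighbours of `P`,
because `∑_{v ≥ k} δ_v` is bounded by a geometric series plus the number of neighbours.

This bound is the modular estimate `exists_modular_bound`. The convolution is split at the union `S`
of `P` and its neighbours.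

* On `S` (`exists_near_bound`), put `F = |f_v| / μ = δ^{1/q} h`. With
  `A(x) = 1 + ∫_S η_{v,N-cq-n}(x - y) h(y)^{p(y)} dy`, Young's inequality `h ≤ A^{1/p} (1 + h^p / A)`
  holds pointwise, and log-Hölder continuity lets the exponents `1/q(y)` and `1/p(y)` of `δ` and
  `A(x)` be frozen at `x`, at the cost of the factor `(1 + 2^v |x - y|)^{cq + n}`. This is possible
  since `2^{-v} ≤ δ ≲ 1` and `1 ≤ A ≲ 2^{nv}`. The result is `η ∗ F ≲ δ^{1/q(x)} A(x)^{1/p(x)}`,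
  whose modular is controlled by `∫_P A ≲ |P|`, by Fubini.
* Off `S` (`exists_far_bound`), `η_{v,N}` is at most `2^{-(N-n)(v-k)}` times a multiple of
  `η_{k,N}`, which is essentially constant on cubes of side `2^{-k}`; the averages of `F` over
  those cubes are bounded since `λ_v ≤ 1`. The decay is dominated by `δ_v^{1/q(x)}` when
  `σ ≤ (N - n) inf q`.
-/

noncomputable section
open MeasureTheory ENNReal Set
open scoped ENNReal

abbrev Rn (n : ℕ) := EuclideanSpace ℝ (Fin n)

/-- The dyadic cube `Q_{v,m}` (with `v ∈ ℕ₀`, so `|Q_{v,m}| = 2^{-vn} ≤ 1`). -/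
def dyadicCube (n : ℕ) (v : ℕ) (m : Fin n → ℤ) : Set (Rn n) :=
  {x | ∀ i, (m i : ℝ) ≤ 2 ^ v * x i ∧ 2 ^ v * x i < m i + 1}

/-- The variable-exponent modular `ϱ_{p(·)}`. -/
def modularVE (n : ℕ) (p : Rn n → ℝ) (f : Rn n → ℝ≥0∞) : ℝ≥0∞ :=
  ∫⁻ x, f x ^ p x

/-- The Luxemburg norm `‖·‖_{p(·)}`. -/
def luxNorm (n : ℕ) (p : Rn n → ℝ) (f : Rn n → ℝ≥0∞) : ℝ≥0∞ :=
  sInf {μ : ℝ≥0∞ | 0 < μ ∧ modularVE n p (fun x => f x / μ) ≤ 1}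

/-- The mixed modular `ϱ_{ℓ^{q(·)}(L^{p(·)})}` (valid when `q⁺ < ∞`). -/
def mixedModular (n : ℕ) (p q : Rn n → ℝ) (f : ℕ → Rn n → ℝ≥0∞) : ℝ≥0∞ :=
  ∑' v, luxNorm n (fun x => p x / q x) (fun x => f v x ^ q x)

/-- The mixed norm `‖·‖_{ℓ^{q(·)}(L^{p(·)})}`. -/
def mixedNorm (n : ℕ) (p q : Rn n → ℝ) (f : ℕ → Rn n → ℝ≥0∞) : ℝ≥0∞ :=
  sInf {μ : ℝ≥0∞ | 0 < μ ∧ mixedModular n p q (fun v x => f v x / μ) ≤ 1}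

/-- The norm `‖(f_v)_v‖_{ℓ^{q(·)}(L^{p(·)}_{p(·)})}`: the supremum over dyadic cubes `P`
with `|P| ≤ 1` (i.e. `P = Q_{vP,m0}`, `vP ∈ ℕ₀`) of the `ℓ^{q(·)}(L^{p(·)})`-norm of
`(|P|^{-1/p(·)} f_v χ_P)_{v ≥ v_P}`; here `|P|^{-1/p(x)} = 2^{vP·n/p(x)}`. -/
def cubeNorm (n : ℕ) (p q : Rn n → ℝ) (f : ℕ → Rn n → ℝ≥0∞) : ℝ≥0∞ :=
  ⨆ (vP : ℕ) (m0 : Fin n → ℤ),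
    mixedNorm n p q fun v => (dyadicCube n vP m0).indicator fun x =>
      (if vP ≤ v then (1 : ℝ≥0∞) else 0) *
        (2 : ℝ≥0∞) ^ ((vP : ℝ) * n / p x) * f v x

/-- `η_{v,N}(x) = 2^{nv}(1+2^v|x|)^{-N}`. -/
def eta (n : ℕ) (v : ℕ) (N : ℝ) (x : Rn n) : ℝ :=
  2 ^ (n * v) * (1 + 2 ^ v * ‖x‖) ^ (-N)

/-- Convolution on `ℝⁿ`. -/
def conv (n : ℕ) (f g : Rn n → ℝ) (x : Rn n) : ℝ :=
  ∫ y, f (x - y) * g y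

/-- Local log-Hölder continuity with constant `c`. -/
def LocLogHolderWith (n : ℕ) (c : ℝ) (g : Rn n → ℝ) : Prop :=
  ∀ x y : Rn n, x ≠ y → |g x - g y| ≤ c / Real.log (Real.exp 1 + 1 / ‖x - y‖)

/-- The log-Hölder decay condition. -/
def LogHolderDecay (n : ℕ) (g : Rn n → ℝ) : Prop :=
  ∃ g_inf c : ℝ, 0 < c ∧ ∀ x : Rn n, |g x - g_inf| ≤ c / Real.log (Real.exp 1 + ‖x‖)

/-! ### Powers and the logarithmic Hölder condition -/

/-- The base `1 + 2^v |z|` of the kernel `η_{v,M}`, with values in `[0,∞]`. -/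
def etaBase (n : ℕ) (v : ℕ) (z : Rn n) : ℝ≥0∞ := ENNReal.ofReal (1 + 2 ^ v * ‖z‖)

/-- The kernel `η_{v,M}` with values in `[0,∞]`. -/
def etaE (n : ℕ) (v : ℕ) (M : ℝ) (z : Rn n) : ℝ≥0∞ := 2 ^ (n * v) * etaBase n v z ^ (-M)

lemma one_le_rpow_of_nonneg' {x : ℝ≥0∞} (hx : 1 ≤ x) {a : ℝ} (ha : 0 ≤ a) : 1 ≤ x ^ a := by
  simpa using ENNReal.rpow_le_rpow hx ha

lemma one_le_etaBase {n v : ℕ} (z : Rn n) : 1 ≤ etaBase n v z := by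
  rw [etaBase, ENNReal.one_le_ofReal]
  have : 0 ≤ 2 ^ v * ‖z‖ := by positivity
  linarith

lemma etaBase_ne_zero {n v : ℕ} (z : Rn n) : etaBase n v z ≠ 0 :=
  (zero_lt_one.trans_le (one_le_etaBase z)).ne'

lemma etaBase_ne_top {n v : ℕ} (z : Rn n) : etaBase n v z ≠ ∞ := ENNReal.ofReal_ne_top

lemma measurable_etaBase {n v : ℕ} : Measurable (etaBase n v) := by
  unfold etaBase; fun_prop

lemma measurable_etaE {n v : ℕ} {M : ℝ} : Measurable (etaE n v M) := by
  unfold etaE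
  exact (measurable_etaBase.pow_const _).const_mul _

lemma ofReal_eta {n v : ℕ} {M : ℝ} (z : Rn n) :
    ENNReal.ofReal (eta n v M z) = etaE n v M z := by
  have h : 0 < 1 + 2 ^ v * ‖z‖ := by positivity
  rw [eta, etaE, etaBase, ENNReal.ofReal_mul (by positivity), ENNReal.ofReal_rpow_of_pos h,
    ENNReal.ofReal_pow (by norm_num)]
  simp

lemma etaE_mul_rpow {n v : ℕ} {M a : ℝ} (z : Rn n) :
    etaE n v M z * etaBase n v z ^ a = etaE n v (M - a) z := by
  rw [etaE, etaE, mul_assoc, ← ENNReal.rpow_add _ _ (etaBase_ne_zero z) (etaBase_ne_top z)]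
  congr 2; ring

lemma etaE_le {n v : ℕ} {M : ℝ} (hM : 0 ≤ M) (z : Rn n) : etaE n v M z ≤ 2 ^ (n * v) := by
  have : etaBase n v z ^ (-M) ≤ 1 := by
    rw [ENNReal.rpow_neg, ENNReal.inv_le_one]
    exact one_le_rpow_of_nonneg' (one_le_etaBase z) hM
  calc etaE n v M z ≤ 2 ^ (n * v) * 1 := by unfold etaE; gcongr
    _ = _ := mul_one _

/-- Changing the exponent of a number in `[T⁻¹, T]` by `|b - a|` costs at most `T^|b - a|`. -/
lemma rpow_le_rpow_mul_abs {t T : ℝ≥0∞} (h0 : t ≠ 0) (h1 : t ≠ ∞) (hl : T⁻¹ ≤ t) (hu : t ≤ T)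
    (a b : ℝ) : t ^ b ≤ t ^ a * T ^ |b - a| := by
  have : t ^ (b - a) ≤ T ^ |b - a| := by
    rcases le_total a b with h | h
    · rw [abs_of_nonneg (sub_nonneg.2 h)]
      exact ENNReal.rpow_le_rpow hu (sub_nonneg.2 h)
    · rw [abs_of_nonpos (sub_nonpos.2 h), show t ^ (b - a) = (t⁻¹) ^ (-(b - a)) by
        rw [ENNReal.inv_rpow, ENNReal.rpow_neg, inv_inv]]
      exact ENNReal.rpow_le_rpow (ENNReal.inv_le_iff_inv_le.1 hl) (by linarith)
  calc t ^ b = t ^ a * t ^ (b - a) := by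
        rw [← ENNReal.rpow_add _ _ h0 h1]; congr 1; ring
    _ ≤ _ := by gcongr

/-- The cost `2^{vΔ}` of an exponent variation `Δ` obeying the local log-Hölder bound
`Δ ≤ c / log (e + 1/r)` at distance `r = |z|` is absorbed by the kernel factor `(1 + 2^v r)^a`,
for any a priori bound `a` of `Δ`. It follows from `2^v ≤ (1 + 2^v r)(e + 1/r)`. -/
lemma two_pow_rpow_le {n v : ℕ} {z : Rn n} (hz : z ≠ 0) {Δ c a : ℝ} (h0 : 0 ≤ Δ) (ha : Δ ≤ a)
    (hc : Δ ≤ c / Real.log (Real.exp 1 + 1 / ‖z‖)) :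
    ((2 : ℝ≥0∞) ^ v) ^ Δ ≤ ENNReal.ofReal (Real.exp c) * etaBase n v z ^ a := by
  have hr : 0 < ‖z‖ := norm_pos_iff.2 hz
  set r := ‖z‖ with hrdef
  have hb : 0 < 1 + 2 ^ v * r := by positivity
  have hE : 0 < Real.exp 1 + 1 / r := by positivity
  have hL : 1 ≤ Real.log (Real.exp 1 + 1 / r) := by
    rw [Real.le_log_iff_exp_le hE]
    have : 0 < 1 / r := by positivity
    linarith
  have hc' : Δ * Real.log (Real.exp 1 + 1 / r) ≤ c := by
    rwa [le_div_iff₀ (by linarith)] at hc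
  have hlog : Real.log (2 ^ v) ≤ Real.log (1 + 2 ^ v * r) + Real.log (Real.exp 1 + 1 / r) := by
    rw [← Real.log_mul hb.ne' hE.ne']
    apply Real.log_le_log (by positivity)
    have h1 : (2 : ℝ) ^ v = 2 ^ v * r * (1 / r) := by field_simp
    calc (2 : ℝ) ^ v = 2 ^ v * r * (1 / r) := h1
      _ ≤ (1 + 2 ^ v * r) * (Real.exp 1 + 1 / r) := by
        gcongr
        · linarith
        · linarith [Real.exp_pos 1]
  have hlb : 0 ≤ Real.log (1 + 2 ^ v * r) := Real.log_nonneg (by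
    have : 0 ≤ 2 ^ v * r := by positivity
    linarith)
  have key : ((2 : ℝ) ^ v) ^ Δ ≤ Real.exp c * (1 + 2 ^ v * r) ^ a := by
    rw [Real.rpow_def_of_pos (by positivity), Real.rpow_def_of_pos hb, ← Real.exp_add]
    apply Real.exp_le_exp.2
    nlinarith [mul_le_mul_of_nonneg_left hlog h0, mul_le_mul_of_nonneg_right ha hlb]
  have := ENNReal.ofReal_le_ofReal key
  rw [ENNReal.ofReal_mul (Real.exp_pos _).le, ← ENNReal.ofReal_rpow_of_pos hb,
    ← ENNReal.ofReal_rpow_of_pos (by positivity), ENNReal.ofReal_pow (by norm_num)] at this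
  simpa [etaBase] using this

/-- If `t ∈ [2^{-v}, D 2^v]` then, for a log-Hölder continuous exponent `g`, `t^{g(y)}` and
`t^{g(x)}` differ by a constant times a power of `1 + 2^v |x - y|`. -/
lemma rpow_logHolder {n v : ℕ} {g : Rn n → ℝ} {c a d : ℝ} (hc : 0 < c)
    (hg : LocLogHolderWith n c g) {D t : ℝ≥0∞} (hD : 1 ≤ D) (hDtop : D ≠ ∞)
    (hl : ((2 : ℝ≥0∞) ^ v)⁻¹ ≤ t) (hu : t ≤ D * 2 ^ v) (x y : Rn n)
    (ha : |g x - g y| ≤ a) (hd : |g x - g y| ≤ d) :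
    t ^ g y ≤ D ^ d * ENNReal.ofReal (Real.exp c) * etaBase n v (x - y) ^ a * t ^ g x := by
  have h2 : (2 : ℝ≥0∞) ^ v ≠ ∞ := by simp
  have h20 : (2 : ℝ≥0∞) ^ v ≠ 0 := by simp
  have ht0 : t ≠ 0 := ((ENNReal.inv_pos.2 h2).trans_le hl).ne'
  have ht1 : t ≠ ∞ := (hu.trans_lt (ENNReal.mul_lt_top hDtop.lt_top h2.lt_top)).ne
  have hcost : ((2 : ℝ≥0∞) ^ v) ^ |g x - g y| ≤
      ENNReal.ofReal (Real.exp c) * etaBase n v (x - y) ^ a := by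
    rcases eq_or_ne x y with rfl | hxy
    · have : 1 ≤ ENNReal.ofReal (Real.exp c) := by
        rw [ENNReal.one_le_ofReal]; exact Real.one_le_exp hc.le
      have h3 : 1 ≤ etaBase n v (x - x) ^ a :=
        one_le_rpow_of_nonneg' (one_le_etaBase _) ((abs_nonneg _).trans ha)
      simpa using mul_le_mul' this h3
    · exact two_pow_rpow_le (sub_ne_zero.2 hxy) (abs_nonneg _) ha (hg x y hxy)
  have hl' : (D * 2 ^ v)⁻¹ ≤ t := by
    refine le_trans (ENNReal.inv_le_inv.2 ?_) hl
    calc (2 : ℝ≥0∞) ^ v = 1 * 2 ^ v := (one_mul _).symm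
      _ ≤ _ := by gcongr
  calc t ^ g y ≤ t ^ g x * (D * 2 ^ v) ^ |g y - g x| := rpow_le_rpow_mul_abs ht0 ht1 hl' hu _ _
    _ = t ^ g x * (D ^ |g x - g y| * (2 ^ v) ^ |g x - g y|) := by
      rw [abs_sub_comm, ENNReal.mul_rpow_of_nonneg _ _ (abs_nonneg _)]
    _ ≤ t ^ g x * (D ^ d * (ENNReal.ofReal (Real.exp c) * etaBase n v (x - y) ^ a)) := by
      gcongr
    _ = _ := by ring

/-- A form of Young's inequality: `t ≤ A^{1/r} (1 + t^r / A)` for `r ≥ 1`. -/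
lemma le_rpow_inv_mul {t A : ℝ≥0∞} (h0 : A ≠ 0) (h1 : A ≠ ∞) {r : ℝ} (hr : 1 ≤ r) :
    t ≤ A ^ (1 / r) * (1 + t ^ r / A) := by
  have hr0 : 0 < r := by linarith
  have hB0 : A ^ (1 / r) ≠ 0 := (ENNReal.rpow_pos (pos_iff_ne_zero.2 h0) h1).ne'
  have hB1 : A ^ (1 / r) ≠ ∞ := ENNReal.rpow_ne_top_of_nonneg (by positivity) h1
  have hs : t / A ^ (1 / r) ≤ 1 + t ^ r / A := by
    have e : t ^ r / A = (t / A ^ (1 / r)) ^ r := by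
      rw [ENNReal.div_rpow_of_nonneg _ _ hr0.le, ← ENNReal.rpow_mul, one_div,
        inv_mul_cancel₀ hr0.ne', ENNReal.rpow_one]
    rw [e]
    rcases le_total (t / A ^ (1 / r)) 1 with h | h
    · exact h.trans le_self_add
    · exact (ENNReal.le_rpow_self_of_one_le h hr).trans le_add_self
  calc t = A ^ (1 / r) * (t / A ^ (1 / r)) := (ENNReal.mul_div_cancel hB0 hB1).symm
    _ ≤ _ := by gcongr

/-! ### Integrals of the kernel and geometry of dyadic cubes -/

/-- The kernels `η_{v,M}`, `M > n`, are integrable uniformly in `v`. -/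
lemma exists_lintegral_etaE (n : ℕ) {M : ℝ} (hM : (n : ℝ) < M) :
    ∃ I : ℝ≥0∞, I ≠ ∞ ∧ ∀ v : ℕ, ∫⁻ z, etaE n v M z ≤ I := by
  have hfin := finite_integral_one_add_norm (E := Rn n) (μ := volume) (r := M) (by simpa using hM)
  refine ⟨_, hfin.ne, fun v => ?_⟩
  have h2 : (2 : ℝ) ^ v ≠ 0 := by positivity
  have hmap := Measure.map_addHaar_smul (volume : Measure (Rn n)) h2
  set F : Rn n → ℝ≥0∞ := fun x => ENNReal.ofReal ((1 + ‖x‖) ^ (-M)) with hF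
  have hFm : Measurable F := by
    rw [hF]; fun_prop
  have hcv : ∫⁻ z, F ((2 : ℝ) ^ v • z) = (2 ^ (n * v))⁻¹ * ∫⁻ z, F z := by
    rw [← lintegral_map hFm (measurable_const_smul _), hmap, lintegral_smul_measure]
    congr 1
    rw [abs_of_nonneg (by positivity), ENNReal.ofReal_inv_of_pos (by positivity),
      ENNReal.ofReal_pow (by positivity), ENNReal.ofReal_pow (by norm_num)]
    simp [← pow_mul, mul_comm]
  have he : ∀ z, etaE n v M z = 2 ^ (n * v) * F ((2 : ℝ) ^ v • z) := by
    intro z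
    have h : 0 < 1 + 2 ^ v * ‖z‖ := by positivity
    rw [etaE, etaBase, ENNReal.ofReal_rpow_of_pos h]
    simp [hF, norm_smul]
  simp_rw [he]
  rw [lintegral_const_mul' _ _ (by simp), hcv, ← mul_assoc, ENNReal.mul_inv_cancel (by simp)
    (by simp), one_mul]

lemma measurableSet_dyadicCube (n k : ℕ) (m : Fin n → ℤ) : MeasurableSet (dyadicCube n k m) := by
  have : dyadicCube n k m =
      ⋂ i, ({x : Rn n | (m i : ℝ) ≤ 2 ^ k * x i} ∩ {x : Rn n | 2 ^ k * x i < (m i : ℝ) + 1}) := by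
    ext x; simp [dyadicCube]
  rw [this]
  refine MeasurableSet.iInter fun i => ?_
  exact (measurableSet_le (by fun_prop) (by fun_prop)).inter
    (measurableSet_lt (by fun_prop) (by fun_prop))

lemma volume_dyadicCube (n k : ℕ) (m : Fin n → ℤ) :
    volume (dyadicCube n k m) = (2 ^ (k * n))⁻¹ := by
  have h2 : (0 : ℝ) < 2 ^ k := by positivity
  have : dyadicCube n k m = (WithLp.ofLp : Rn n → (Fin n → ℝ)) ⁻¹'
      (Set.pi Set.univ fun i => Set.Ico ((m i : ℝ) / 2 ^ k) ((m i + 1) / 2 ^ k)) := by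
    ext x
    simp only [dyadicCube, mem_ofPred_eq, mem_preimage, mem_pi, mem_univ, true_implies, mem_Ico]
    refine forall_congr' fun i => ?_
    rw [div_le_iff₀' h2, lt_div_iff₀' h2]
  rw [this, (PiLp.volume_preserving_ofLp (Fin n)).measure_preimage
    (MeasurableSet.univ_pi fun _ => measurableSet_Ico).nullMeasurableSet, Real.volume_pi_Ico]
  have : ∀ i : Fin n, ENNReal.ofReal (((m i : ℝ) + 1) / 2 ^ k - m i / 2 ^ k) = (2 ^ k)⁻¹ := by
    intro i
    rw [← sub_div, add_sub_cancel_left, one_div, ENNReal.ofReal_inv_of_pos h2,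
      ENNReal.ofReal_pow (by norm_num)]
    simp
  simp [this, pow_mul, ENNReal.inv_pow]

lemma mem_dyadicCube_floor (n k : ℕ) (y : Rn n) :
    y ∈ dyadicCube n k (fun i => ⌊2 ^ k * y i⌋) := fun _ =>
  ⟨Int.floor_le _, Int.lt_floor_add_one _⟩

lemma iUnion_dyadicCube (n k : ℕ) : ⋃ m, dyadicCube n k m = Set.univ :=
  Set.eq_univ_of_forall fun y => Set.mem_iUnion.2 ⟨_, mem_dyadicCube_floor n k y⟩

lemma eq_floor_of_mem {n k : ℕ} {m : Fin n → ℤ} {y : Rn n} (h : y ∈ dyadicCube n k m) :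
    m = fun i => ⌊2 ^ k * y i⌋ := by
  funext i
  exact (Int.floor_eq_iff.2 (h i)).symm

lemma pairwise_disjoint_dyadicCube (n k : ℕ) :
    Pairwise (Function.onFun Disjoint (dyadicCube n k)) := by
  intro m m' hne
  rw [Function.onFun, Set.disjoint_left]
  intro y h h'
  exact hne ((eq_floor_of_mem h).trans (eq_floor_of_mem h').symm)

lemma etaBase_le_of_mem {n k : ℕ} {m : Fin n → ℤ} {y y' : Rn n} (h : y ∈ dyadicCube n k m)
    (h' : y' ∈ dyadicCube n k m) (x : Rn n) :
    etaBase n k (x - y) ≤ ENNReal.ofReal (1 + n) * etaBase n k (x - y') := by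
  have hcoord : ∀ i, |2 ^ k * (y' - y) i| ≤ 1 := by
    intro i
    have a := h i
    have b := h' i
    rw [PiLp.sub_apply, mul_sub, abs_le]
    constructor <;> linarith [a.1, a.2, b.1, b.2]
  have hdist : 2 ^ k * ‖y' - y‖ ≤ n := by
    have e : (2 ^ k * ‖y' - y‖) ^ 2 ≤ (n : ℝ) ^ 2 := by
      rw [mul_pow, EuclideanSpace.norm_sq_eq, Finset.mul_sum]
      calc ∑ i, ((2 : ℝ) ^ k) ^ 2 * ‖(y' - y) i‖ ^ 2 ≤ ∑ _i : Fin n, (1 : ℝ) := by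
            refine Finset.sum_le_sum fun i _ => ?_
            rw [Real.norm_eq_abs, sq_abs, ← mul_pow, ← sq_abs]
            exact pow_le_one₀ (abs_nonneg _) (hcoord i)
        _ = n := by simp
        _ ≤ (n : ℝ) ^ 2 := by exact_mod_cast Nat.le_self_pow two_ne_zero n
    exact (sq_le_sq₀ (by positivity) (by positivity)).1 e
  rw [etaBase, etaBase, ← ENNReal.ofReal_mul (by positivity)]
  apply ENNReal.ofReal_le_ofReal
  have htri : ‖x - y‖ ≤ ‖x - y'‖ + ‖y' - y‖ := by
    simpa using norm_add_le (x - y') (y' - y)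
  have : 2 ^ k * ‖x - y‖ ≤ 2 ^ k * ‖x - y'‖ + n := by
    have := mul_le_mul_of_nonneg_left htri (show (0 : ℝ) ≤ 2 ^ k by positivity)
    linarith
  have h3 : 0 ≤ (n : ℝ) * (2 ^ k * ‖x - y'‖) := by positivity
  nlinarith

/-- The kernel at scale `2^{-k}` is essentially constant on cubes of side `2^{-k}`. -/
lemma etaE_le_of_mem {n k : ℕ} {m : Fin n → ℤ} {y y' : Rn n} (h : y ∈ dyadicCube n k m)
    (h' : y' ∈ dyadicCube n k m) (x : Rn n) {N : ℝ} (hN : 0 ≤ N) :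
    etaE n k N (x - y') ≤ ENNReal.ofReal (1 + n) ^ N * etaE n k N (x - y) := by
  have hb := ENNReal.rpow_le_rpow (etaBase_le_of_mem h h' x) hN
  rw [ENNReal.mul_rpow_of_nonneg _ _ hN] at hb
  have h0 : etaBase n k (x - y) ^ N ≠ 0 :=
    (ENNReal.rpow_pos (pos_iff_ne_zero.2 (etaBase_ne_zero _)) (etaBase_ne_top _)).ne'
  have h1 : etaBase n k (x - y) ^ N ≠ ∞ := ENNReal.rpow_ne_top_of_nonneg hN (etaBase_ne_top _)
  have h0' : etaBase n k (x - y') ^ N ≠ 0 :=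
    (ENNReal.rpow_pos (pos_iff_ne_zero.2 (etaBase_ne_zero _)) (etaBase_ne_top _)).ne'
  have h1' : etaBase n k (x - y') ^ N ≠ ∞ := ENNReal.rpow_ne_top_of_nonneg hN (etaBase_ne_top _)
  have key : etaBase n k (x - y') ^ (-N) ≤
      ENNReal.ofReal (1 + n) ^ N * etaBase n k (x - y) ^ (-N) := by
    rw [ENNReal.rpow_neg, ENNReal.rpow_neg, ← div_eq_mul_inv, ENNReal.le_div_iff_mul_le
      (Or.inl h0) (Or.inl h1), mul_comm, ← div_eq_mul_inv]
    exact ENNReal.div_le_of_le_mul hb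
  calc etaE n k N (x - y') = 2 ^ (n * k) * etaBase n k (x - y') ^ (-N) := rfl
    _ ≤ 2 ^ (n * k) * (ENNReal.ofReal (1 + n) ^ N * etaBase n k (x - y) ^ (-N)) := by gcongr
    _ = _ := by rw [etaE]; ring

/-- The offsets of a cube and its neighbours. -/
def nbr (n : ℕ) : Finset (Fin n → ℤ) := Finset.Icc (-1) 1

/-- The union of the cube `Q_{k,m}` and its neighbours. -/
def nearSet (n k : ℕ) (m : Fin n → ℤ) : Set (Rn n) := ⋃ e ∈ nbr n, dyadicCube n k (m + e)

lemma measurableSet_nearSet (n k : ℕ) (m : Fin n → ℤ) : MeasurableSet (nearSet n k m) :=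
  Finset.measurableSet_biUnion _ fun _ _ => measurableSet_dyadicCube _ _ _

lemma one_le_dist_of_not_near {n k : ℕ} {m : Fin n → ℤ} {x y : Rn n}
    (hx : x ∈ dyadicCube n k m) (hy : y ∉ nearSet n k m) : 1 ≤ 2 ^ k * ‖x - y‖ := by
  set m' : Fin n → ℤ := fun i => ⌊2 ^ k * y i⌋ with hm'
  have hy' := mem_dyadicCube_floor n k y
  have hne : m' - m ∉ nbr n := by
    intro h
    apply hy
    simp only [nearSet, mem_iUnion]
    exact ⟨m' - m, h, by simpa using hy'⟩
  have : ∃ i, 2 ≤ |m' i - m i| := by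
    by_contra! hcon
    apply hne
    rw [nbr, Finset.mem_Icc, Pi.le_def, Pi.le_def]
    refine ⟨fun i => ?_, fun i => ?_⟩ <;>
    · have := abs_lt.1 (hcon i)
      simp only [Pi.neg_apply, Pi.one_apply, Pi.sub_apply]
      omega
  obtain ⟨i, hi⟩ := this
  have hx1 := (hx i).1
  have hx2 := (hx i).2
  have hy1 : (m' i : ℝ) ≤ 2 ^ k * y i := (hy' i).1
  have hy2 : 2 ^ k * y i < m' i + 1 := (hy' i).2
  have hcoord : 1 ≤ |2 ^ k * (x - y) i| := by
    rw [PiLp.sub_apply, mul_sub, le_abs]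
    rcases le_abs.1 hi with h | h
    · right
      have : (2 : ℝ) ≤ m' i - m i := by exact_mod_cast h
      linarith
    · left
      have : (2 : ℝ) ≤ -(m' i - m i) := by exact_mod_cast h
      linarith
  have hn := PiLp.norm_apply_le (x - y) i
  rw [abs_mul, abs_of_nonneg (by positivity)] at hcoord
  rw [Real.norm_eq_abs] at hn
  exact hcoord.trans (by gcongr)

/-- At distance at least `2^{-k}`, the kernel at scale `2^{-v}` is smaller than that at scale
`2^{-k}` by a factor `2^{-(N-n)(v-k)}`. -/
lemma etaE_far {n k v : ℕ} (hkv : k ≤ v) {N : ℝ} (hN : 0 ≤ N) {z : Rn n}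
    (hz : 1 ≤ 2 ^ k * ‖z‖) :
    etaE n v N z ≤ 2 ^ N * ((2 : ℝ≥0∞) ^ (v - k)) ^ (-(N - n)) * etaE n k N z := by
  obtain ⟨j, rfl⟩ := Nat.exists_eq_add_of_le hkv
  rw [Nat.add_sub_cancel_left]
  have hb : etaBase n k z ≤ 2 * ((2 : ℝ≥0∞) ^ j)⁻¹ * etaBase n (k + j) z := by
    have : ENNReal.ofReal ((1 + 2 ^ k * ‖z‖)) ≤
        ENNReal.ofReal (2 * (2 ^ j)⁻¹ * (1 + 2 ^ (k + j) * ‖z‖)) := by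
      apply ENNReal.ofReal_le_ofReal
      rw [pow_add]
      have h2 : (0 : ℝ) < (2 ^ j)⁻¹ := by positivity
      have h3 : (2 : ℝ) * (2 ^ j)⁻¹ * (1 + 2 ^ k * 2 ^ j * ‖z‖) =
        2 * (2 ^ j)⁻¹ + 2 * (2 ^ k * ‖z‖) := by field_simp
      rw [h3]; linarith
    rw [ENNReal.ofReal_mul (by positivity), ENNReal.ofReal_mul (by positivity),
      ENNReal.ofReal_inv_of_pos (by positivity), ENNReal.ofReal_pow (by norm_num)] at this
    simpa [etaBase] using this
  have hp := ENNReal.rpow_le_rpow hb hN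
  rw [ENNReal.mul_rpow_of_nonneg _ _ hN, ENNReal.mul_rpow_of_nonneg _ _ hN] at hp
  have h0 : etaBase n (k + j) z ^ N ≠ 0 :=
    (ENNReal.rpow_pos (pos_iff_ne_zero.2 (etaBase_ne_zero _)) (etaBase_ne_top _)).ne'
  have h1 : etaBase n (k + j) z ^ N ≠ ∞ := ENNReal.rpow_ne_top_of_nonneg hN (etaBase_ne_top _)
  have key : etaBase n (k + j) z ^ (-N) ≤
      2 ^ N * (((2 : ℝ≥0∞) ^ j)⁻¹) ^ N * etaBase n k z ^ (-N) := by
    rw [ENNReal.rpow_neg, ENNReal.rpow_neg, ← div_eq_mul_inv, ENNReal.le_div_iff_mul_le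
      (Or.inl ?_) (Or.inl ?_), mul_comm, ← div_eq_mul_inv]
    · exact ENNReal.div_le_of_le_mul hp
    · exact (ENNReal.rpow_pos (pos_iff_ne_zero.2 (etaBase_ne_zero _)) (etaBase_ne_top _)).ne'
    · exact ENNReal.rpow_ne_top_of_nonneg hN (etaBase_ne_top _)
  have hpow : ((2 : ℝ≥0∞) ^ j) ^ (-(N - n)) = 2 ^ (n * j) * (((2 : ℝ≥0∞) ^ j)⁻¹) ^ N := by
    rw [show -(N - n) = (n : ℝ) + -N by ring, ENNReal.rpow_add _ _ (by simp) (by simp),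
      ENNReal.inv_rpow, ENNReal.rpow_neg, ENNReal.rpow_natCast, ← pow_mul, mul_comm j n]
  calc etaE n (k + j) N z = 2 ^ (n * (k + j)) * etaBase n (k + j) z ^ (-N) := rfl
    _ ≤ 2 ^ (n * (k + j)) * (2 ^ N * (((2 : ℝ≥0∞) ^ j)⁻¹) ^ N * etaBase n k z ^ (-N)) := by
      gcongr
    _ = _ := by rw [hpow, etaE, mul_add, pow_add]; ring

/-! ### The contribution of the neighbouring cubes -/

lemma LocLogHolderWith.const_mul {n : ℕ} {c : ℝ} {g : Rn n → ℝ} (h : LocLogHolderWith n c g)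
    {b : ℝ} (hb : 0 ≤ b) : LocLogHolderWith n (b * c) fun x => b * g x := by
  intro x y hxy
  rw [← mul_sub, abs_mul, abs_of_nonneg hb, mul_div_assoc]
  exact mul_le_mul_of_nonneg_left (h x y hxy) hb

lemma abs_one_div_sub_le {a s t : ℝ} (ha : 0 < a) (hs : a ≤ s) (ht : a ≤ t) :
    |1 / s - 1 / t| ≤ 1 / a := by
  have h1 := one_div_le_one_div_of_le ha hs
  have h2 := one_div_le_one_div_of_le ha ht
  have h3 : 0 < 1 / s := one_div_pos.2 (ha.trans_le hs)
  have h4 : 0 < 1 / t := one_div_pos.2 (ha.trans_le ht)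
  rw [abs_le]; constructor <;> linarith

/-- Key estimate. Writing `F = δ^{1/q} h` and applying Young's inequality with
`A = 1 + ∫_S η_{v,M} h^p`, the exponents `1/q(y)` and `1/p(y)` are frozen at `x` at the cost of
`(1 + 2^v |x - y|)^{cq + n}`: this uses `|1/p(x) - 1/p(y)| ≤ 1` and `A ≲ 2^{nv}`. -/
lemma exists_near_bound {n : ℕ} (hn : 1 ≤ n) {p q : Rn n → ℝ} (hpm : Measurable p)
    (hqm : Measurable q) (hp1 : ∀ x, 1 ≤ p x) {q0 : ℝ} (hq0 : 0 < q0) (hq : ∀ x, q0 ≤ q x)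
    {cp cq : ℝ} (hcp : 0 < cp) (hplog : LocLogHolderWith n cp fun x => 1 / p x)
    (hcq : 0 < cq) (hqlog : LocLogHolderWith n cq fun x => 1 / q x)
    {N : ℝ} (hN : 2 * n + cq < N) {D J : ℝ≥0∞} (hD : 1 ≤ D) (hD' : D ≠ ∞) (hJ : J ≠ ∞) :
    ∃ C : ℝ≥0∞, C ≠ ∞ ∧ ∀ (v : ℕ) (S : Set (Rn n)) (F : Rn n → ℝ≥0∞) (δ : ℝ≥0∞),
      Measurable F → ((2 : ℝ≥0∞) ^ v)⁻¹ ≤ δ → δ ≤ D →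
      ∫⁻ y in S, (F y * δ ^ (-(1 / q y))) ^ p y ≤ J → ∀ x,
      ∫⁻ y in S, etaE n v N (x - y) * F y ≤ C * (δ ^ (1 / q x) *
        (1 + ∫⁻ y in S, etaE n v (N - cq - n) (x - y) * (F y * δ ^ (-(1 / q y))) ^ p y)
          ^ (1 / p x)) := by
  have hn0 : (0 : ℝ) < n := by exact_mod_cast hn
  obtain ⟨I, hI, hIle⟩ := exists_lintegral_etaE n (M := N - cq - n) (by linarith)
  set K1 : ℝ≥0∞ := D ^ (1 / q0) * ENNReal.ofReal (Real.exp cq) with hK1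
  set K2 : ℝ≥0∞ := ((1 + J) ^ (1 / (n : ℝ))) ^ (n : ℝ) * ENNReal.ofReal (Real.exp (n * cp))
    with hK2
  have hJ1 : (1 : ℝ≥0∞) + J ≠ ∞ := by simp [hJ]
  have hJn : (1 + J) ^ (1 / (n : ℝ)) ≠ ∞ := ENNReal.rpow_ne_top_of_nonneg (by positivity) hJ1
  have hK1t : K1 ≠ ∞ := ENNReal.mul_ne_top
    (ENNReal.rpow_ne_top_of_nonneg (by positivity) hD') ENNReal.ofReal_ne_top
  have hK2t : K2 ≠ ∞ := ENNReal.mul_ne_top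
    (ENNReal.rpow_ne_top_of_nonneg (by positivity) hJn) ENNReal.ofReal_ne_top
  refine ⟨K1 * K2 * (I + 1), ENNReal.mul_ne_top (ENNReal.mul_ne_top hK1t hK2t) (by simp [hI]), ?_⟩
  intro v S F δ hF hl hu hS x
  have h2v : (1 : ℝ≥0∞) ≤ 2 ^ v := one_le_pow₀ (by norm_num)
  have hδ0 : δ ≠ 0 := ((ENNReal.inv_pos.2 (by simp)).trans_le hl).ne'
  have hδt : δ ≠ ∞ := (hu.trans_lt hD'.lt_top).ne
  set h : Rn n → ℝ≥0∞ := fun y => F y * δ ^ (-(1 / q y)) with hh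
  have hhm : Measurable fun y => h y ^ p y := by
    refine Measurable.pow (hF.mul ?_) hpm
    exact Measurable.pow measurable_const (by fun_prop)
  set A : ℝ≥0∞ := 1 + ∫⁻ y in S, etaE n v (N - cq - n) (x - y) * h y ^ p y with hA
  have hA1 : 1 ≤ A := le_self_add
  have hAu : A ≤ (1 + J) * 2 ^ (n * v) := by
    calc A ≤ 1 + ∫⁻ y in S, 2 ^ (n * v) * h y ^ p y := by
          rw [hA]; gcongr with y; exact etaE_le (by linarith) _
      _ = 1 + 2 ^ (n * v) * ∫⁻ y in S, h y ^ p y := by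
          rw [lintegral_const_mul' _ _ (by simp)]
      _ ≤ 1 * 2 ^ (n * v) + 2 ^ (n * v) * J := by
          gcongr
          rw [one_mul]; exact one_le_pow₀ (by norm_num)
      _ = _ := by ring
  have hAt : A ≠ ∞ := (hAu.trans_lt (ENNReal.mul_lt_top hJ1.lt_top (by simp))).ne
  have hA0 : A ≠ 0 := ne_of_gt (zero_lt_one.trans_le hA1)
  -- the exponent `1/q` is frozen at `x`
  have hq1 : ∀ y, δ ^ (1 / q y) ≤ K1 * etaBase n v (x - y) ^ cq * δ ^ (1 / q x) := by
    intro y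
    refine rpow_logHolder hcq hqlog hD hD' hl (hu.trans ?_) x y ?_
      (abs_one_div_sub_le hq0 (hq x) (hq y))
    · exact le_mul_of_one_le_right' h2v
    · rcases eq_or_ne x y with rfl | hxy
      · simpa using hcq.le
      refine (hqlog x y hxy).trans (div_le_self hcq.le ?_)
      rw [Real.le_log_iff_exp_le (by positivity)]
      have : 0 ≤ 1 / ‖x - y‖ := by positivity
      linarith
  -- the exponent `1/p` is frozen at `x`, via the `n`-th root of `A`
  have hp2 : ∀ y, A ^ (1 / p y) ≤ K2 * etaBase n v (x - y) ^ (n : ℝ) * A ^ (1 / p x) := by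
    intro y
    have e : ∀ z, (A ^ (1 / (n : ℝ))) ^ ((n : ℝ) * (1 / p z)) = A ^ (1 / p z) := by
      intro z
      rw [← ENNReal.rpow_mul]; congr 1; field_simp
    have hvar : |(n : ℝ) * (1 / p x) - n * (1 / p y)| ≤ n := by
      rw [← mul_sub, abs_mul, abs_of_pos hn0]
      have := abs_one_div_sub_le one_pos (hp1 x) (hp1 y)
      rw [div_one] at this
      exact mul_le_of_le_one_right hn0.le this
    have := rpow_logHolder (v := v) (a := (n : ℝ)) (d := (n : ℝ)) (mul_pos hn0 hcp)
      (hplog.const_mul hn0.le) (D := (1 + J) ^ (1 / (n : ℝ))) (t := A ^ (1 / (n : ℝ)))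
      (one_le_rpow_of_nonneg' le_self_add (by positivity)) hJn
      ((ENNReal.inv_le_one.2 h2v).trans (one_le_rpow_of_nonneg' hA1 (by positivity))) ?_ x y
      hvar hvar
    · simpa only [e] using this
    · calc A ^ (1 / (n : ℝ)) ≤ ((1 + J) * 2 ^ (n * v)) ^ (1 / (n : ℝ)) := by gcongr
        _ = (1 + J) ^ (1 / (n : ℝ)) * 2 ^ v := by
          rw [ENNReal.mul_rpow_of_nonneg _ _ (by positivity), mul_comm n v, pow_mul,
            ← ENNReal.rpow_natCast _ n, ← ENNReal.rpow_mul, mul_one_div_cancel hn0.ne',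
            ENNReal.rpow_one]
  have hpt : ∀ y, etaE n v N (x - y) * F y ≤ K1 * K2 * (δ ^ (1 / q x) * A ^ (1 / p x)) *
      (etaE n v (N - cq - n) (x - y) * (1 + h y ^ p y / A)) := by
    intro y
    have hFh : F y = δ ^ (1 / q y) * h y := by
      have : δ ^ (1 / q y) * δ ^ (-(1 / q y)) = 1 := by
        rw [← ENNReal.rpow_add _ _ hδ0 hδt, add_neg_cancel, ENNReal.rpow_zero]
      calc F y = F y * (δ ^ (1 / q y) * δ ^ (-(1 / q y))) := by rw [this, mul_one]
        _ = _ := by rw [hh]; ring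
    calc etaE n v N (x - y) * F y = etaE n v N (x - y) * (δ ^ (1 / q y) * h y) := by rw [hFh]
      _ ≤ etaE n v N (x - y) * ((K1 * etaBase n v (x - y) ^ cq * δ ^ (1 / q x)) *
            ((K2 * etaBase n v (x - y) ^ (n : ℝ) * A ^ (1 / p x)) * (1 + h y ^ p y / A))) := by
          gcongr
          · exact hq1 y
          · exact (le_rpow_inv_mul hA0 hAt (hp1 y)).trans (by gcongr; exact hp2 y)
      _ = K1 * K2 * (δ ^ (1 / q x) * A ^ (1 / p x)) * ((etaE n v N (x - y) *
            etaBase n v (x - y) ^ cq * etaBase n v (x - y) ^ (n : ℝ)) * (1 + h y ^ p y / A)) := by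
          ring
      _ = _ := by rw [etaE_mul_rpow, etaE_mul_rpow]
  have hem : Measurable fun y => etaE n v (N - cq - n) (x - y) :=
    measurable_etaE.comp (measurable_const.sub measurable_id)
  have hint : ∫⁻ y in S, etaE n v (N - cq - n) (x - y) * (1 + h y ^ p y / A) ≤ I + 1 := by
    calc ∫⁻ y in S, etaE n v (N - cq - n) (x - y) * (1 + h y ^ p y / A)
        = ∫⁻ y in S, (etaE n v (N - cq - n) (x - y) +
            (etaE n v (N - cq - n) (x - y) * h y ^ p y) * A⁻¹) := by
          refine lintegral_congr fun y => ?_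
          rw [mul_add, mul_one, div_eq_mul_inv, mul_assoc]
      _ = (∫⁻ y in S, etaE n v (N - cq - n) (x - y)) +
            (∫⁻ y in S, etaE n v (N - cq - n) (x - y) * h y ^ p y) * A⁻¹ := by
          rw [lintegral_add_left hem, lintegral_mul_const' _ _ (ENNReal.inv_ne_top.2 hA0)]
      _ ≤ I + A * A⁻¹ := by
          gcongr
          · refine (setLIntegral_le_lintegral _ _).trans ?_
            rw [lintegral_sub_left_eq_self (fun z => etaE n v (N - cq - n) z) x]
            exact hIle v
          · exact le_add_self
      _ = I + 1 := by rw [ENNReal.mul_inv_cancel hA0 hAt]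
  have hct : K1 * K2 * (δ ^ (1 / q x) * A ^ (1 / p x)) ≠ ∞ := by
    refine ENNReal.mul_ne_top (ENNReal.mul_ne_top hK1t hK2t) (ENNReal.mul_ne_top ?_ ?_)
    · exact ENNReal.rpow_ne_top_of_ne_zero hδ0 hδt
    · exact ENNReal.rpow_ne_top_of_ne_zero hA0 hAt
  calc ∫⁻ y in S, etaE n v N (x - y) * F y
      ≤ ∫⁻ y in S, K1 * K2 * (δ ^ (1 / q x) * A ^ (1 / p x)) *
          (etaE n v (N - cq - n) (x - y) * (1 + h y ^ p y / A)) := lintegral_mono hpt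
    _ = K1 * K2 * (δ ^ (1 / q x) * A ^ (1 / p x)) *
          ∫⁻ y in S, etaE n v (N - cq - n) (x - y) * (1 + h y ^ p y / A) :=
        lintegral_const_mul' _ _ hct
    _ ≤ K1 * K2 * (δ ^ (1 / q x) * A ^ (1 / p x)) * (I + 1) := by gcongr
    _ = _ := by ring

/-! ### The contribution of the distant cubes -/

/-- If `F` has bounded averages over the cubes of side `2^{-k}`, the part of `η_{v,N} ∗ F` that
comes from outside the neighbours of a cube is `O(2^{-(N-n)(v-k)})` on that cube. -/
lemma exists_far_bound (n : ℕ) {N : ℝ} (hN : (n : ℝ) < N) {B : ℝ≥0∞} (hB : B ≠ ∞) :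
    ∃ C : ℝ≥0∞, C ≠ ∞ ∧ ∀ (k v : ℕ) (m : Fin n → ℤ) (F : Rn n → ℝ≥0∞), k ≤ v → Measurable F →
      (∀ m', ∫⁻ y in dyadicCube n k m', F y ≤ B * volume (dyadicCube n k m')) →
      ∀ x ∈ dyadicCube n k m, ∫⁻ y in (nearSet n k m)ᶜ, etaE n v N (x - y) * F y ≤
        C * ((2 : ℝ≥0∞) ^ (v - k)) ^ (-(N - n)) := by
  have hN0 : 0 ≤ N := (Nat.cast_nonneg n).trans hN.le
  obtain ⟨I, hI, hIle⟩ := exists_lintegral_etaE n hN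
  set G : ℝ≥0∞ := ENNReal.ofReal (1 + n) ^ N with hG
  have hGt : G ≠ ∞ := ENNReal.rpow_ne_top_of_nonneg hN0 ENNReal.ofReal_ne_top
  have h2N : (2 : ℝ≥0∞) ^ N ≠ ∞ := ENNReal.rpow_ne_top_of_nonneg hN0 (by simp)
  refine ⟨2 ^ N * (G * G * B * I), by finiteness, ?_⟩
  intro k v m F hkv hF hav x hx
  have hcube : ∀ m', ∫⁻ y in dyadicCube n k m', etaE n k N (x - y) * F y ≤
      G * G * B * ∫⁻ y in dyadicCube n k m', etaE n k N (x - y) := by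
    intro m'
    have hQ := measurableSet_dyadicCube n k m'
    rcases (dyadicCube n k m').eq_empty_or_nonempty with h | ⟨y0, hy0⟩
    · simp [h]
    have het : etaE n k N (x - y0) ≠ ∞ := ((etaE_le hN0 _).trans_lt (by simp)).ne
    calc ∫⁻ y in dyadicCube n k m', etaE n k N (x - y) * F y
        ≤ ∫⁻ y in dyadicCube n k m', (G * etaE n k N (x - y0)) * F y := by
          refine setLIntegral_mono' hQ fun y hy => ?_
          gcongr
          exact etaE_le_of_mem hy0 hy x hN0
      _ = (G * etaE n k N (x - y0)) * ∫⁻ y in dyadicCube n k m', F y :=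
          lintegral_const_mul' _ _ (ENNReal.mul_ne_top hGt het)
      _ ≤ (G * etaE n k N (x - y0)) * (B * volume (dyadicCube n k m')) := by
          gcongr; exact hav m'
      _ = G * B * ∫⁻ _ in dyadicCube n k m', etaE n k N (x - y0) := by
          rw [setLIntegral_const]; ring
      _ ≤ G * B * ∫⁻ y in dyadicCube n k m', G * etaE n k N (x - y) := by
          gcongr G * B * ?_
          exact setLIntegral_mono' hQ fun y hy => etaE_le_of_mem hy hy0 x hN0
      _ = _ := by rw [lintegral_const_mul' _ _ hGt]; ring
  have hsplit : ∀ H : Rn n → ℝ≥0∞, ∫⁻ y, H y = ∑' m', ∫⁻ y in dyadicCube n k m', H y := by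
    intro H
    rw [← lintegral_iUnion (measurableSet_dyadicCube n k) (pairwise_disjoint_dyadicCube n k),
      iUnion_dyadicCube, Measure.restrict_univ]
  have hall : ∫⁻ y, etaE n k N (x - y) * F y ≤ G * G * B * I := by
    calc ∫⁻ y, etaE n k N (x - y) * F y
        ≤ ∑' m', G * G * B * ∫⁻ y in dyadicCube n k m', etaE n k N (x - y) := by
          rw [hsplit]; exact ENNReal.tsum_le_tsum hcube
      _ = G * G * B * ∫⁻ y, etaE n k N (x - y) := by rw [ENNReal.tsum_mul_left, ← hsplit]
      _ ≤ _ := by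
          gcongr
          rw [lintegral_sub_left_eq_self (fun z => etaE n k N z) x]
          exact hIle k
  have hw : ((2 : ℝ≥0∞) ^ (v - k)) ^ (-(N - n)) ≠ ∞ :=
    ENNReal.rpow_ne_top_of_ne_zero (by simp) (by simp)
  calc ∫⁻ y in (nearSet n k m)ᶜ, etaE n v N (x - y) * F y
      ≤ ∫⁻ y in (nearSet n k m)ᶜ, (2 ^ N * ((2 : ℝ≥0∞) ^ (v - k)) ^ (-(N - n))) *
          (etaE n k N (x - y) * F y) := by
        refine setLIntegral_mono' (measurableSet_nearSet n k m).compl fun y hy => ?_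
        rw [← mul_assoc]
        gcongr
        exact etaE_far hkv hN0 (one_le_dist_of_not_near hx hy)
    _ = (2 ^ N * ((2 : ℝ≥0∞) ^ (v - k)) ^ (-(N - n))) *
          ∫⁻ y in (nearSet n k m)ᶜ, etaE n k N (x - y) * F y :=
        lintegral_const_mul' _ _ (ENNReal.mul_ne_top h2N hw)
    _ ≤ (2 ^ N * ((2 : ℝ≥0∞) ^ (v - k)) ^ (-(N - n))) * (G * G * B * I) := by
        gcongr
        exact (setLIntegral_le_lintegral _ _).trans hall
    _ = _ := by ring

/-! ### The modular estimate on a single cube -/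

lemma le_one_add_rpow (t : ℝ≥0∞) {r : ℝ} (hr : 1 ≤ r) : t ≤ 1 + t ^ r := by
  simpa using le_rpow_inv_mul (t := t) one_ne_zero ENNReal.one_ne_top hr

lemma lintegral_nearSet (n k : ℕ) (m : Fin n → ℤ) (H : Rn n → ℝ≥0∞) :
    ∫⁻ y in nearSet n k m, H y = ∑ e ∈ nbr n, ∫⁻ y in dyadicCube n k (m + e), H y := by
  refine lintegral_biUnion_finset ?_ (fun e _ => measurableSet_dyadicCube n k _) H
  intro e _ e' _ hne
  exact pairwise_disjoint_dyadicCube n k (fun h => hne (add_left_cancel h))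

/-- If `F δ^{-1/q}` is normalised on the neighbours of the cube `P = Q_{k,m}`, and `F 2^{-1/q}` on
all cubes of the same size, then `(η_{v,N} ∗ F) δ^{-1/q}` is normalised on `P`
up to a uniform constant. The lower bound `2^{-σ(v-k)}` for `δ` lets it dominate the far part. -/
lemma exists_modular_bound {n : ℕ} (hn : 1 ≤ n) {p q : Rn n → ℝ} (hpm : Measurable p)
    (hqm : Measurable q) (hp1 : ∀ x, 1 ≤ p x) {q0 : ℝ} (hq0 : 0 < q0) (hq : ∀ x, q0 ≤ q x)
    {cp cq : ℝ} (hcp : 0 < cp) (hplog : LocLogHolderWith n cp fun x => 1 / p x)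
    (hcq : 0 < cq) (hqlog : LocLogHolderWith n cq fun x => 1 / q x)
    {N : ℝ} (hN : 2 * n + cq < N) {σ : ℝ} (hσ1 : σ ≤ 1) (hσ : σ ≤ q0 * (N - n))
    {D : ℝ≥0∞} (hD : 1 ≤ D) (hD' : D ≠ ∞) :
    ∃ C : ℝ≥0∞, C ≠ 0 ∧ C ≠ ∞ ∧ ∀ (k v : ℕ) (m : Fin n → ℤ) (F : Rn n → ℝ≥0∞) (δ : ℝ≥0∞),
      k ≤ v → Measurable F → ((2 : ℝ≥0∞) ^ (v - k)) ^ (-σ) ≤ δ → δ ≤ D →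
      (∀ e ∈ nbr n, ∫⁻ y in dyadicCube n k (m + e), (F y * δ ^ (-(1 / q y))) ^ p y ≤
        (2 ^ (k * n))⁻¹) →
      (∀ m', ∫⁻ y in dyadicCube n k m', (F y * 2 ^ (-(1 / q y))) ^ p y ≤ (2 ^ (k * n))⁻¹) →
      ∫⁻ x in dyadicCube n k m,
        ((∫⁻ y, etaE n v N (x - y) * F y) * δ ^ (-(1 / q x)) / C) ^ p x ≤ (2 ^ (k * n))⁻¹ := by
  have hn0 : (0 : ℝ) < n := by exact_mod_cast hn
  obtain ⟨I, hI, hIle⟩ := exists_lintegral_etaE n (M := N - cq - n) (by linarith)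
  have h2q : (2 : ℝ≥0∞) ^ (1 / q0) ≠ ∞ := ENNReal.rpow_ne_top_of_nonneg (by positivity) (by simp)
  obtain ⟨Cf, hCf, hfar⟩ := exists_far_bound n (N := N) (by linarith)
    (B := 2 ^ (1 / q0) * 2) (by finiteness)
  set J : ℝ≥0∞ := ((nbr n).card : ℝ≥0∞) with hJ
  have hJt : J ≠ ∞ := ENNReal.natCast_ne_top _
  obtain ⟨Cn, hCn, hnear⟩ := exists_near_bound hn hpm hqm hp1 hq0 hq hcp hplog hcq hqlog hN
    hD hD' hJt
  set E : ℝ≥0∞ := 1 + I * J with hE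
  have hE1 : 1 ≤ E := le_self_add
  have hE0 : E ≠ 0 := (zero_lt_one.trans_le hE1).ne'
  have hEt : E ≠ ∞ := by rw [hE]; finiteness
  have hC0 : Cn + Cf + 1 ≠ 0 := by simp
  have hCt : Cn + Cf + 1 ≠ ∞ := by finiteness
  refine ⟨(Cn + Cf + 1) * E, mul_ne_zero hC0 hE0, by finiteness, ?_⟩
  intro k v m F δ hkv hF hl hu hloc hall
  have hw0 : (2 : ℝ≥0∞) ^ (v - k) ≠ 0 := by simp
  have hwt : (2 : ℝ≥0∞) ^ (v - k) ≠ ∞ := by simp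
  have hw1 : (1 : ℝ≥0∞) ≤ 2 ^ (v - k) := one_le_pow₀ (by norm_num)
  have hδ0 : δ ≠ 0 := ((ENNReal.rpow_pos (pos_iff_ne_zero.2 hw0) hwt).trans_le hl).ne'
  have hδt : δ ≠ ∞ := (hu.trans_lt hD'.lt_top).ne
  have hl2 : ((2 : ℝ≥0∞) ^ v)⁻¹ ≤ δ := by
    refine le_trans ?_ hl
    rw [ENNReal.rpow_neg, ENNReal.inv_le_inv]
    calc ((2 : ℝ≥0∞) ^ (v - k)) ^ σ ≤ (2 ^ (v - k)) ^ (1 : ℝ) :=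
          ENNReal.rpow_le_rpow_of_exponent_le hw1 hσ1
      _ = 2 ^ (v - k) := ENNReal.rpow_one _
      _ ≤ 2 ^ v := pow_le_pow_right₀ (by norm_num) (Nat.sub_le _ _)
  have hvol : ∀ m', volume (dyadicCube n k m') = (2 ^ (k * n))⁻¹ := volume_dyadicCube n k
  have hkn1 : ((2 : ℝ≥0∞) ^ (k * n))⁻¹ ≤ 1 := ENNReal.inv_le_one.2 (one_le_pow₀ (by norm_num))
  set H : Rn n → ℝ≥0∞ := fun y => (F y * δ ^ (-(1 / q y))) ^ p y with hH
  have hHm : Measurable H := by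
    refine Measurable.pow (hF.mul ?_) hpm
    exact Measurable.pow measurable_const (by fun_prop)
  have hHS : ∫⁻ y in nearSet n k m, H y ≤ J * (2 ^ (k * n))⁻¹ := by
    rw [lintegral_nearSet]
    calc ∑ e ∈ nbr n, ∫⁻ y in dyadicCube n k (m + e), H y
        ≤ ∑ _e ∈ nbr n, ((2 : ℝ≥0∞) ^ (k * n))⁻¹ := Finset.sum_le_sum hloc
      _ = _ := by rw [Finset.sum_const, nsmul_eq_mul]
  have hav : ∀ m', ∫⁻ y in dyadicCube n k m', F y ≤
      2 ^ (1 / q0) * 2 * volume (dyadicCube n k m') := by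
    intro m'
    have hpt : ∀ y, F y ≤ 2 ^ (1 / q0) * (1 + (F y * 2 ^ (-(1 / q y))) ^ p y) := by
      intro y
      have e : (2 : ℝ≥0∞) ^ (1 / q y) * 2 ^ (-(1 / q y)) = 1 := by
        rw [← ENNReal.rpow_add _ _ (by simp) (by simp), add_neg_cancel, ENNReal.rpow_zero]
      calc F y = 2 ^ (1 / q y) * (F y * 2 ^ (-(1 / q y))) := by
            rw [mul_left_comm, e, mul_one]
        _ ≤ _ := by
            refine mul_le_mul' ?_ (le_one_add_rpow _ (hp1 y))
            exact ENNReal.rpow_le_rpow_of_exponent_le (by norm_num)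
              (one_div_le_one_div_of_le hq0 (hq y))
    calc ∫⁻ y in dyadicCube n k m', F y
        ≤ ∫⁻ y in dyadicCube n k m', 2 ^ (1 / q0) * (1 + (F y * 2 ^ (-(1 / q y))) ^ p y) :=
          lintegral_mono hpt
      _ = 2 ^ (1 / q0) * (volume (dyadicCube n k m') +
            ∫⁻ y in dyadicCube n k m', (F y * 2 ^ (-(1 / q y))) ^ p y) := by
          rw [lintegral_const_mul' _ _ h2q, lintegral_add_left measurable_const,
            setLIntegral_const, one_mul]
      _ ≤ 2 ^ (1 / q0) * (volume (dyadicCube n k m') + volume (dyadicCube n k m')) := by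
          gcongr
          rw [hvol]; exact hall m'
      _ = _ := by ring
  set A : Rn n → ℝ≥0∞ := fun x =>
    1 + ∫⁻ y in nearSet n k m, etaE n v (N - cq - n) (x - y) * H y with hA
  have hA1 : ∀ x, 1 ≤ A x := fun x => le_self_add
  have hZ : ∀ x ∈ dyadicCube n k m, ∫⁻ y, etaE n v N (x - y) * F y ≤
      (Cn + Cf + 1) * (δ ^ (1 / q x) * A x ^ (1 / p x)) := by
    intro x hx
    have hqx : 0 < q x := hq0.trans_le (hq x)
    have hnr := hnear v (nearSet n k m) F δ hF hl2 hu
      (hHS.trans (mul_le_of_le_one_right' hkn1)) x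
    have hfr := hfar k v m F hkv hF hav x hx
    have hdec : ((2 : ℝ≥0∞) ^ (v - k)) ^ (-(N - n)) ≤ δ ^ (1 / q x) * A x ^ (1 / p x) := by
      calc ((2 : ℝ≥0∞) ^ (v - k)) ^ (-(N - n))
          ≤ ((2 : ℝ≥0∞) ^ (v - k)) ^ (-σ * (1 / q x)) := by
            apply ENNReal.rpow_le_rpow_of_exponent_le hw1
            rw [neg_mul, mul_one_div, neg_le_neg_iff, div_le_iff₀ hqx]
            refine hσ.trans ?_
            rw [mul_comm]
            have : 0 ≤ N - n := by linarith
            exact mul_le_mul_of_nonneg_left (hq x) this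
        _ = (((2 : ℝ≥0∞) ^ (v - k)) ^ (-σ)) ^ (1 / q x) := ENNReal.rpow_mul _ _ _
        _ ≤ δ ^ (1 / q x) := ENNReal.rpow_le_rpow hl (by positivity)
        _ ≤ _ := by
            refine le_mul_of_one_le_right' (one_le_rpow_of_nonneg' (hA1 x) ?_)
            have := hp1 x
            positivity
    rw [← lintegral_add_compl _ (measurableSet_nearSet n k m)]
    calc _ ≤ Cn * (δ ^ (1 / q x) * A x ^ (1 / p x)) + Cf * (δ ^ (1 / q x) * A x ^ (1 / p x)) :=
          add_le_add hnr (hfr.trans (by gcongr))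
      _ = (Cn + Cf) * (δ ^ (1 / q x) * A x ^ (1 / p x)) := by ring
      _ ≤ _ := mul_le_mul' le_self_add le_rfl
  have hpt : ∀ x ∈ dyadicCube n k m,
      ((∫⁻ y, etaE n v N (x - y) * F y) * δ ^ (-(1 / q x)) / ((Cn + Cf + 1) * E)) ^ p x ≤
        A x * E⁻¹ := by
    intro x hx
    have hpx : 0 < p x := one_pos.trans_le (hp1 x)
    have e : δ ^ (1 / q x) * δ ^ (-(1 / q x)) = 1 := by
      rw [← ENNReal.rpow_add _ _ hδ0 hδt, add_neg_cancel, ENNReal.rpow_zero]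
    have h1 : (∫⁻ y, etaE n v N (x - y) * F y) * δ ^ (-(1 / q x)) / ((Cn + Cf + 1) * E) ≤
        A x ^ (1 / p x) / E := by
      calc _ ≤ (Cn + Cf + 1) * (δ ^ (1 / q x) * A x ^ (1 / p x)) * δ ^ (-(1 / q x)) /
            ((Cn + Cf + 1) * E) := by gcongr; exact hZ x hx
        _ = (Cn + Cf + 1) * (δ ^ (1 / q x) * δ ^ (-(1 / q x)) * A x ^ (1 / p x)) /
            ((Cn + Cf + 1) * E) := by congr 1; ring
        _ = _ := by rw [e, one_mul, ENNReal.mul_div_mul_left _ _ hC0 hCt]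
    calc _ ≤ (A x ^ (1 / p x) / E) ^ p x := ENNReal.rpow_le_rpow h1 hpx.le
      _ = A x / E ^ p x := by
        rw [ENNReal.div_rpow_of_nonneg _ _ hpx.le, ← ENNReal.rpow_mul, one_div,
          inv_mul_cancel₀ hpx.ne', ENNReal.rpow_one]
      _ ≤ A x / E := by gcongr; exact ENNReal.le_rpow_self_of_one_le hE1 (hp1 x)
      _ = _ := div_eq_mul_inv _ _
  have hfub : ∫⁻ x in dyadicCube n k m, ∫⁻ y in nearSet n k m,
      etaE n v (N - cq - n) (x - y) * H y ≤ I * (J * (2 ^ (k * n))⁻¹) := by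
    rw [lintegral_lintegral_swap]
    · calc ∫⁻ y in nearSet n k m, ∫⁻ x in dyadicCube n k m, etaE n v (N - cq - n) (x - y) * H y
          ≤ ∫⁻ y in nearSet n k m, I * H y := by
            refine lintegral_mono fun y => ?_
            dsimp only
            have hem : Measurable fun x => etaE n v (N - cq - n) (x - y) :=
              measurable_etaE.comp (measurable_id.sub measurable_const)
            rw [lintegral_mul_const _ hem]
            gcongr
            refine (setLIntegral_le_lintegral _ _).trans ?_
            rw [lintegral_sub_right_eq_self (fun z => etaE n v (N - cq - n) z) y]
            exact hIle v
        _ = I * ∫⁻ y in nearSet n k m, H y := lintegral_const_mul' _ _ hI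
        _ ≤ _ := by gcongr
    · refine Measurable.aemeasurable ?_
      exact (measurable_etaE.comp (measurable_fst.sub measurable_snd)).mul
        (hHm.comp measurable_snd)
  calc _ ≤ ∫⁻ x in dyadicCube n k m, A x * E⁻¹ :=
        setLIntegral_mono' (measurableSet_dyadicCube n k m) hpt
    _ = (volume (dyadicCube n k m) + ∫⁻ x in dyadicCube n k m, ∫⁻ y in nearSet n k m,
          etaE n v (N - cq - n) (x - y) * H y) * E⁻¹ := by
        rw [lintegral_mul_const' _ _ (ENNReal.inv_ne_top.2 hE0), hA,
          lintegral_add_left measurable_const, setLIntegral_const, one_mul]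
    _ ≤ ((2 ^ (k * n))⁻¹ + I * (J * (2 ^ (k * n))⁻¹)) * E⁻¹ := by
        rw [hvol]; gcongr
    _ = (2 ^ (k * n))⁻¹ * (E * E⁻¹) := by rw [hE]; ring
    _ = _ := by rw [ENNReal.mul_inv_cancel hE0 hEt, mul_one]

/-! ### Luxemburg norms and summation over the scales -/

lemma modularVE_anti {n : ℕ} {r : Rn n → ℝ} (hr : ∀ x, 0 ≤ r x) {f g : Rn n → ℝ≥0∞}
    (hfg : ∀ x, f x ≤ g x) {s t : ℝ≥0∞} (hst : s ≤ t) :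
    modularVE n r (fun x => f x / t) ≤ modularVE n r (fun x => g x / s) :=
  lintegral_mono fun x => ENNReal.rpow_le_rpow (ENNReal.div_le_div (hfg x) hst) (hr x)

lemma luxNorm_mono {n : ℕ} {r : Rn n → ℝ} (hr : ∀ x, 0 ≤ r x) {f g : Rn n → ℝ≥0∞}
    (hfg : ∀ x, f x ≤ g x) : luxNorm n r f ≤ luxNorm n r g :=
  sInf_le_sInf fun _ h => ⟨h.1, (modularVE_anti hr hfg le_rfl).trans h.2⟩

lemma modularVE_le_one_of_luxNorm_lt {n : ℕ} {r : Rn n → ℝ} (hr : ∀ x, 0 ≤ r x)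
    {f : Rn n → ℝ≥0∞} {s : ℝ≥0∞} (h : luxNorm n r f < s) :
    modularVE n r (fun x => f x / s) ≤ 1 := by
  obtain ⟨t, ht, hts⟩ := sInf_lt_iff.1 h
  exact (modularVE_anti hr (fun _ => le_rfl) hts.le).trans ht.2

lemma mixedModular_le_one_of_mixedNorm_lt {n : ℕ} {p q : Rn n → ℝ} (hp : ∀ x, 0 < p x)
    (hq : ∀ x, 0 < q x) {f : ℕ → Rn n → ℝ≥0∞} {s : ℝ≥0∞} (h : mixedNorm n p q f < s) :
    mixedModular n p q (fun v x => f v x / s) ≤ 1 := by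
  obtain ⟨t, ht, hts⟩ := sInf_lt_iff.1 h
  refine le_trans (ENNReal.tsum_le_tsum fun v => ?_) ht.2
  exact luxNorm_mono (fun x => (div_pos (hp x) (hq x)).le) fun x =>
    ENNReal.rpow_le_rpow (ENNReal.div_le_div le_rfl hts.le) (hq x).le

/-- The modular that defines the mixed norm on a cube of side `2^{-k}` is an average over it. -/
lemma modularVE_cube {n : ℕ} {p q : Rn n → ℝ} (hp : ∀ x, 0 < p x) (hq : ∀ x, 0 < q x)
    (k : ℕ) (m : Fin n → ℤ) (G : Rn n → ℝ≥0∞) (μ s : ℝ≥0∞) :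
    modularVE n (fun x => p x / q x) (fun x => ((dyadicCube n k m).indicator
      (fun x => 1 * (2 : ℝ≥0∞) ^ ((k : ℝ) * n / p x) * G x) x / μ) ^ q x / s) =
    2 ^ (k * n) * ∫⁻ x in dyadicCube n k m, (G x / μ * s ^ (-(1 / q x))) ^ p x := by
  rw [← lintegral_const_mul' _ _ (by simp), ← lintegral_indicator (measurableSet_dyadicCube n k m),
    modularVE]
  refine lintegral_congr fun x => ?_
  have hpx := hp x
  have hqx := hq x
  by_cases hx : x ∈ dyadicCube n k m
  · rw [indicator_of_mem hx, indicator_of_mem hx, one_mul,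
      ENNReal.div_rpow_of_nonneg _ _ (by positivity), ← ENNReal.rpow_mul,
      mul_div_cancel₀ _ hqx.ne', mul_div_assoc, ENNReal.mul_rpow_of_nonneg _ _ hpx.le,
      ← ENNReal.rpow_mul, div_mul_cancel₀ _ hpx.ne', ENNReal.mul_rpow_of_nonneg _ _ hpx.le,
      ← ENNReal.rpow_mul, show -(1 / q x) * p x = -(p x / q x) by ring, ENNReal.rpow_neg,
      div_eq_mul_inv, mul_assoc, ← Nat.cast_mul, ENNReal.rpow_natCast]
  · rw [indicator_of_notMem hx, indicator_of_notMem hx, ENNReal.zero_div,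
      ENNReal.zero_rpow_of_pos hqx, ENNReal.zero_div, ENNReal.zero_rpow_of_pos (by positivity)]

lemma luxNorm_zero {n : ℕ} {r : Rn n → ℝ} (hr : ∀ x, 0 < r x) :
    luxNorm n r (fun _ => 0) = 0 := by
  refine le_antisymm (le_of_forall_gt_imp_ge_of_dense fun a ha => sInf_le ⟨ha, ?_⟩) zero_le
  simp [modularVE, ENNReal.zero_rpow_of_pos (hr _)]

lemma tsum_shift_geometric (r : ℝ≥0∞) (k : ℕ) :
    ∑' v : ℕ, (if k ≤ v then r ^ (v - k) else 0) = (1 - r)⁻¹ := by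
  rw [← (add_left_injective k).tsum_eq, ← ENNReal.tsum_geometric]
  · simp
  · intro v hv
    have : k ≤ v := by by_contra h; simp [h] at hv
    exact ⟨v - k, Nat.sub_add_cancel this⟩

lemma ofReal_abs_conv_le {n v : ℕ} {N : ℝ} (f : Rn n → ℝ) (x : Rn n) :
    ENNReal.ofReal |conv n (eta n v N) f x| ≤
      ∫⁻ y, etaE n v N (x - y) * ENNReal.ofReal |f y| := by
  rw [← Real.enorm_eq_ofReal_abs]
  refine (enorm_integral_le_lintegral_enorm _).trans (lintegral_mono fun y => ?_)
  dsimp only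
  rw [enorm_mul, ← ofReal_eta, Real.enorm_eq_ofReal_abs, Real.enorm_eq_ofReal_abs,
    abs_of_nonneg (a := eta n v N (x - y))]
  unfold eta
  positivity


/-- convolution with `η_{v,N}` is bounded on `ℓ^{q(·)}(L^{p(·)}_{p(·)})`
for `p ∈ 𝒫^log` with `p⁻ > 1`, `q ∈ 𝒫₀^log` with `0 < q⁻ ≤ q⁺ < ∞`, and
`N > 2n + c_log(1/p) + c_log(1/q)`. -/
theorem statement3 (n : ℕ) (hn : 1 ≤ n) (p q : Rn n → ℝ)
    (hpmeas : Measurable p) (hqmeas : Measurable q)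
    (hp1 : ∀ x, 1 ≤ p x) (hq0 : ∃ c : ℝ, 0 < c ∧ ∀ x, c ≤ q x)
    (cp : ℝ) (hcp : 0 < cp) (hplog : LocLogHolderWith n cp fun x => 1 / p x)
    (hpdecay : LogHolderDecay n fun x => 1 / p x)
    (cq : ℝ) (hcq : 0 < cq) (hqlog : LocLogHolderWith n cq fun x => 1 / q x)
    (hqdecay : LogHolderDecay n fun x => 1 / q x)
    (qm qM : ℝ) (hqm : 0 < qm)
    (hq : ∀ᵐ x ∂(volume : Measure (Rn n)), qm ≤ q x ∧ q x ≤ qM)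
    (pm : ℝ) (hpm1 : 1 < pm) (hpm : ∀ᵐ x ∂(volume : Measure (Rn n)), pm ≤ p x)
    (N : ℝ) (hN : 2 * n + cp + cq < N) :
    ∃ c : ℝ, 0 < c ∧ ∀ f : ℕ → Rn n → ℝ, (∀ v, Measurable (f v)) →
      cubeNorm n p q (fun v x => ENNReal.ofReal |conv n (eta n v N) (f v) x|) ≤
        ENNReal.ofReal c * cubeNorm n p q (fun v x => ENNReal.ofReal |f v x|) := by
  obtain ⟨q0, hq0, hql⟩ := hq0
  have hp0 : ∀ x, 0 < p x := fun x => one_pos.trans_le (hp1 x)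
  have hqp : ∀ x, 0 < q x := fun x => hq0.trans_le (hql x)
  have hr0 : ∀ x, 0 < p x / q x := fun x => div_pos (hp0 x) (hqp x)
  have hn0 : (0 : ℝ) < n := by exact_mod_cast hn
  set σ : ℝ := min 1 (q0 * (N - n)) with hσ
  have hσ0 : 0 < σ := lt_min one_pos (mul_pos hq0 (by linarith))
  set J : ℝ≥0∞ := ((nbr n).card : ℝ≥0∞) with hJ
  have hJt : J ≠ ∞ := ENNReal.natCast_ne_top _
  obtain ⟨C, hC0, hCt, hC⟩ := exists_modular_bound hn hpmeas hqmeas hp1 hq0 hql hcp hplog hcq hqlog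
    (N := N) (by linarith) (min_le_left _ _) (min_le_right _ _) (D := 1 + J) le_self_add
    (by finiteness)
  set r : ℝ≥0∞ := 2 ^ (-σ) with hr
  have hr1 : r < 1 := ENNReal.rpow_lt_one_of_one_lt_of_neg (by norm_num) (by linarith)
  have hrg : (1 - r)⁻¹ ≠ ∞ := ENNReal.inv_ne_top.2 (ne_of_gt (tsub_pos_of_lt hr1))
  -- `K` bounds the sum over all scales of the weights `δ v` introduced below
  set K : ℝ≥0∞ := 1 + ((1 - r)⁻¹ + J) with hK
  have hK1 : 1 ≤ K := le_self_add
  have hK0 : K ≠ 0 := (zero_lt_one.trans_le hK1).ne'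
  have hKt : K ≠ ∞ := by finiteness
  have hKq0 : K ^ (1 / q0) ≠ 0 :=
    (zero_lt_one.trans_le (one_le_rpow_of_nonneg' hK1 (by positivity))).ne'
  have hKqt : K ^ (1 / q0) ≠ ∞ := ENNReal.rpow_ne_top_of_nonneg (by positivity) hKt
  -- dividing `δ v` by `K` enlarges `δ v ^ (-1 / q x)` by at most `K ^ (1 / q0)`
  set cE : ℝ≥0∞ := C * K ^ (1 / q0) with hcE
  have hcE0 : cE ≠ 0 := mul_ne_zero hC0 hKq0
  have hcEt : cE ≠ ∞ := by finiteness
  refine ⟨cE.toReal, ENNReal.toReal_pos hcE0 hcEt, fun f hf => ?_⟩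
  rw [ENNReal.ofReal_toReal hcEt]
  refine iSup₂_le fun k m => ?_
  rw [mul_comm cE, ← ENNReal.div_le_iff hcE0 hcEt]
  refine le_of_forall_gt_imp_ge_of_dense fun μ hμ => ?_
  rcases eq_or_ne μ ∞ with rfl | hμt
  · exact le_top
  have hμ0 : μ ≠ 0 := (zero_le.trans_lt hμ).ne'
  rw [ENNReal.div_le_iff hcE0 hcEt, mul_comm μ]
  refine sInf_le ⟨pos_iff_ne_zero.2 (mul_ne_zero hcE0 hμ0), ?_⟩
  -- `lam v m'` is the `v`-th term of the mixed modular of `f / μ` on the cube `Q_{k,m'}`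
  set lam : ℕ → (Fin n → ℤ) → ℝ≥0∞ := fun v m' => luxNorm n (fun x => p x / q x) fun x =>
    ((dyadicCube n k m').indicator (fun x => (if k ≤ v then (1 : ℝ≥0∞) else 0) *
      (2 : ℝ≥0∞) ^ ((k : ℝ) * n / p x) * ENNReal.ofReal |f v x|) x / μ) ^ q x with hlam
  have hsum : ∀ m', ∑' v, lam v m' ≤ 1 := fun m' =>
    mixedModular_le_one_of_mixedNorm_lt hp0 hqp
      (lt_of_le_of_lt (le_iSup₂ (f := fun vP m0 => mixedNorm n p q fun v =>
        (dyadicCube n vP m0).indicator fun x => (if vP ≤ v then (1 : ℝ≥0∞) else 0) *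
        (2 : ℝ≥0∞) ^ ((vP : ℝ) * n / p x) * ENNReal.ofReal |f v x|) k m') hμ)
  have hlam1 : ∀ v m', lam v m' ≤ 1 := fun v m' => (ENNReal.le_tsum v).trans (hsum m')
  have hV0 : (2 : ℝ≥0∞) ^ (k * n) ≠ 0 := by simp
  have hVt : (2 : ℝ≥0∞) ^ (k * n) ≠ ∞ := by simp
  have hmod : ∀ v m' s, k ≤ v → lam v m' < s → ∫⁻ x in dyadicCube n k m',
      (ENNReal.ofReal |f v x| / μ * s ^ (-(1 / q x))) ^ p x ≤ (2 ^ (k * n))⁻¹ := by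
    intro v m' s hkv hs
    have h := modularVE_le_one_of_luxNorm_lt (fun x => (hr0 x).le) hs
    simp only [if_pos hkv] at h
    rw [modularVE_cube hp0 hqp] at h
    rwa [ENNReal.le_inv_iff_mul_le, mul_comm]
  set S : ℕ → ℝ≥0∞ := fun v => ∑ e ∈ nbr n, lam v (m + e) with hS
  -- the weight `δ v` that dominates both the neighbouring and the distant cubes
  set δ : ℕ → ℝ≥0∞ := fun v => ((2 : ℝ≥0∞) ^ (v - k)) ^ (-σ) + S v with hδ
  have hterm : ∀ v, luxNorm n (fun x => p x / q x) (fun x => ((dyadicCube n k m).indicator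
      (fun x => (if k ≤ v then (1 : ℝ≥0∞) else 0) * (2 : ℝ≥0∞) ^ ((k : ℝ) * n / p x) *
        ENNReal.ofReal |conv n (eta n v N) (f v) x|) x / (cE * μ)) ^ q x) ≤
      if k ≤ v then δ v / K else 0 := by
    intro v
    by_cases hkv : k ≤ v
    swap
    · simp only [if_neg hkv, zero_mul, indicator_zero, ENNReal.zero_div,
        ENNReal.zero_rpow_of_pos (hqp _)]
      exact (luxNorm_zero hr0).le
    simp only [if_pos hkv]
    have hw1 : (1 : ℝ≥0∞) ≤ 2 ^ (v - k) := one_le_pow₀ (by norm_num)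
    have hg0 : ((2 : ℝ≥0∞) ^ (v - k)) ^ (-σ) ≠ 0 := (ENNReal.rpow_pos (by positivity) (by simp)).ne'
    have hg1 : ((2 : ℝ≥0∞) ^ (v - k)) ^ (-σ) ≤ 1 := by
      rw [ENNReal.rpow_neg]
      exact ENNReal.inv_le_one.2 (one_le_rpow_of_nonneg' hw1 hσ0.le)
    have hSJ : S v ≤ J := by
      calc S v ≤ ∑ _e ∈ nbr n, (1 : ℝ≥0∞) := Finset.sum_le_sum fun e _ => hlam1 v _
        _ = J := by simp [hJ]
    have hδJ : δ v ≤ 1 + J := add_le_add hg1 hSJ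
    have hδ0 : δ v ≠ 0 := fun h => hg0 (add_eq_zero.1 h).1
    have hδt : δ v ≠ ∞ := (hδJ.trans_lt (by finiteness)).ne
    have hlt : ∀ e ∈ nbr n, lam v (m + e) < δ v := by
      intro e he
      calc lam v (m + e) ≤ S v :=
            Finset.single_le_sum (f := fun e => lam v (m + e)) (fun _ _ => zero_le) he
        _ < S v + ((2 : ℝ≥0∞) ^ (v - k)) ^ (-σ) :=
            ENNReal.lt_add_right (hSJ.trans_lt hJt.lt_top).ne hg0
        _ = δ v := add_comm _ _
    set F : Rn n → ℝ≥0∞ := fun y => ENNReal.ofReal |f v y| / μ with hF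
    have hFm : Measurable F := by
      have := hf v
      simp only [hF, div_eq_mul_inv]
      exact (ENNReal.measurable_ofReal.comp (measurable_norm.comp this)).mul_const _
    have key := hC k v m F (δ v) hkv hFm le_self_add hδJ (fun e he => hmod v _ _ hkv (hlt e he))
      (fun m' => hmod v m' 2 hkv ((hlam1 v m').trans_lt (by norm_num)))
    refine sInf_le ⟨ENNReal.div_pos hδ0 hKt, ?_⟩
    rw [modularVE_cube hp0 hqp, ← ENNReal.mul_inv_cancel hV0 hVt]
    gcongr
    refine le_trans (lintegral_mono fun x => ENNReal.rpow_le_rpow ?_ (hp0 x).le) key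
    have hqx := hqp x
    have hconv : ENNReal.ofReal |conv n (eta n v N) (f v) x| ≤
        (∫⁻ y, etaE n v N (x - y) * F y) * μ := by
      refine (ofReal_abs_conv_le _ _).trans_eq ?_
      rw [← lintegral_mul_const' _ _ hμt]
      refine lintegral_congr fun y => ?_
      rw [mul_assoc, hF, ENNReal.div_mul_cancel hμ0 hμt]
    have hpow : (δ v / K) ^ (-(1 / q x)) ≤ δ v ^ (-(1 / q x)) * K ^ (1 / q0) := by
      rw [ENNReal.rpow_neg, ENNReal.div_rpow_of_nonneg _ _ (by positivity), ENNReal.inv_div,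
        ENNReal.rpow_neg, div_eq_mul_inv, mul_comm]
      · exact mul_le_mul' le_rfl (ENNReal.rpow_le_rpow_of_exponent_le hK1
          (one_div_le_one_div_of_le hq0 (hql x)))
      · exact Or.inl (ENNReal.rpow_ne_top_of_nonneg (by positivity) hKt)
      · exact Or.inl (ENNReal.rpow_pos (pos_iff_ne_zero.2 hK0) hKt).ne'
    calc ENNReal.ofReal |conv n (eta n v N) (f v) x| / (cE * μ) * (δ v / K) ^ (-(1 / q x))
        ≤ (∫⁻ y, etaE n v N (x - y) * F y) * μ / (cE * μ) *
            (δ v ^ (-(1 / q x)) * K ^ (1 / q0)) :=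
          mul_le_mul' (ENNReal.div_le_div hconv le_rfl) hpow
      _ = (∫⁻ y, etaE n v N (x - y) * F y) / cE * (δ v ^ (-(1 / q x)) * K ^ (1 / q0)) := by
          rw [ENNReal.mul_div_mul_right _ _ hμ0 hμt]
      _ = (∫⁻ y, etaE n v N (x - y) * F y) * δ v ^ (-(1 / q x)) * K ^ (1 / q0) /
            (C * K ^ (1 / q0)) := by
          simp only [hcE, div_eq_mul_inv]; ring
      _ = _ := ENNReal.mul_div_mul_right _ _ hKq0 hKqt
  calc _ ≤ ∑' v, (if k ≤ v then δ v / K else 0) := ENNReal.tsum_le_tsum hterm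
    _ ≤ ∑' v, ((if k ≤ v then r ^ (v - k) else 0) + S v) * K⁻¹ := by
        refine ENNReal.tsum_le_tsum fun v => ?_
        split_ifs
        · have : ((2 : ℝ≥0∞) ^ (v - k)) ^ (-σ) = r ^ (v - k) := by
            rw [hr, ← ENNReal.rpow_natCast, ← ENNReal.rpow_natCast, ← ENNReal.rpow_mul,
              ← ENNReal.rpow_mul, mul_comm]
          rw [hδ, div_eq_mul_inv, ← this]
        · exact zero_le
    _ = ((1 - r)⁻¹ + ∑ e ∈ nbr n, ∑' v, lam v (m + e)) * K⁻¹ := by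
        rw [ENNReal.tsum_mul_right, ENNReal.tsum_add, tsum_shift_geometric, hS,
          Summable.tsum_finsetSum fun _ _ => ENNReal.summable]
    _ ≤ K * K⁻¹ := by
        gcongr
        refine le_trans (add_le_add le_rfl ?_) (le_add_self : _ ≤ K)
        calc _ ≤ ∑ _e ∈ nbr n, (1 : ℝ≥0∞) := Finset.sum_le_sum fun e _ => hsum _
          _ = J := by simp [hJ]
    _ = 1 := ENNReal.mul_inv_cancel hK0 hKt

end
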